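/- If B and B′ are two n×n quaternion matrices in modified Jordan form (block upper bidiagonal with diagonal blocks λ_t·I_{n_t}, λ_t complex with nonnegative imaginary part, λ₁ ⪰ ⋯ ⪰ λ_s; superdiagonal block G_{t,t+1} = 0 if λ_t ≠ λ_{t+1}, and G_{t,t+1} = [I_{n_{t+1}}; 0] with n_t ≥ n_{t+1} if λ_t = λ_{t+1}; all other blocks zero) and B is similar to B′ over ℍ, then B = B′. -/

import Mathlib

open Matrix
open scoped Quaternion

noncomputable section

/-- A quaternion matrix `U` is unitary if `Uᴴ * U = 1`. -/
def IsUnitaryM {m : Type*} [Fintype m] [DecidableEq m] (U : Matrix m m ℍ[ℝ]) : Prop :=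
  Uᴴ * U = 1

/-- `A` and `B` are unitarily similar if `A = Uᴴ * B * U` for some unitary `U`. -/
def UnitarilySimilar {m : Type*} [Fintype m] [DecidableEq m] (A B : Matrix m m ℍ[ℝ]) : Prop :=
  ∃ U : Matrix m m ℍ[ℝ], IsUnitaryM U ∧ A = Uᴴ * B * U

/-- The embedding of `ℂ = ℝ + ℝi` into the quaternions. -/
def cq (z : ℂ) : ℍ[ℝ] := ⟨z.re, z.im, 0, 0⟩

/-- The ordering `⪰` on complex numbers: `a+bi ⪰ c+di` iff (`a ≥ c` and `b = d`) or `b > d`. -/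
def csucceq (z w : ℂ) : Prop := (w.re ≤ z.re ∧ z.im = w.im) ∨ w.im < z.im

/-- `A` and `B` are similar over `ℍ`: `A = S⁻¹ * B * S` for some invertible `S`. -/
def SimilarQ {m : Type*} [Fintype m] [DecidableEq m] (A B : Matrix m m ℍ[ℝ]) : Prop :=
  ∃ S : (Matrix m m ℍ[ℝ])ˣ, A = (S⁻¹).val * B * S.val

/-- `psum sz m` is the sum of the first `m` block sizes: the starting index of block `m`. -/
def psum {s : ℕ} (sz : Fin s → ℕ) (m : ℕ) : ℕ :=
  ∑ t ∈ Finset.range m, if h : t < s then sz ⟨t, h⟩ else 0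

/-- Row/column index `r` belongs to the `i`-th diagonal block of the partition `sz`. -/
def InBlock {s : ℕ} (sz : Fin s → ℕ) (i : Fin s) (r : ℕ) : Prop :=
  psum sz i ≤ r ∧ r < psum sz ((i : ℕ) + 1)

/-- `B` is a modified Jordan matrix: block upper bidiagonal for a partition `sz` with `s`
blocks; diagonal blocks `λ_t • I` with `λ_t` complex with nonnegative imaginary part and
`λ_1 ⪰ ⋯ ⪰ λ_s`; superdiagonal block `G_{t,t+1} = 0` if `λ_t ≠ λ_{t+1}` while if
`λ_t = λ_{t+1}` then `n_t ≥ n_{t+1}` and `G_{t,t+1} = [I; 0]`; all other blocks zero. -/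
def IsModifiedJordan {n : ℕ} (B : Matrix (Fin n) (Fin n) ℍ[ℝ]) : Prop :=
  ∃ (s : ℕ) (sz : Fin s → ℕ) (lam : Fin s → ℂ),
    (∀ t, 0 < sz t) ∧ (∑ t, sz t) = n ∧
    (∀ t, 0 ≤ (lam t).im) ∧
    (∀ (t : Fin s) (h : (t : ℕ) + 1 < s), csucceq (lam t) (lam ⟨(t : ℕ) + 1, h⟩)) ∧
    (∀ (x y : Fin n) (t : Fin s), InBlock sz t x → InBlock sz t y →
        B x y = if x = y then cq (lam t) else 0) ∧
    (∀ (x y : Fin n) (t u : Fin s), InBlock sz t x → InBlock sz u y →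
        (u : ℕ) ≠ (t : ℕ) → (u : ℕ) ≠ (t : ℕ) + 1 → B x y = 0) ∧
    (∀ (t : Fin s) (h : (t : ℕ) + 1 < s),
        (lam t ≠ lam ⟨(t : ℕ) + 1, h⟩ →
          ∀ x y : Fin n, InBlock sz t x → InBlock sz ⟨(t : ℕ) + 1, h⟩ y → B x y = 0) ∧
        (lam t = lam ⟨(t : ℕ) + 1, h⟩ →
          sz ⟨(t : ℕ) + 1, h⟩ ≤ sz t ∧
          ∀ x y : Fin n, InBlock sz t x → InBlock sz ⟨(t : ℕ) + 1, h⟩ y →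
            B x y = if (x : ℕ) - psum sz t = (y : ℕ) - psum sz ((t : ℕ) + 1)
              then 1 else 0))

/-!
A matrix in modified Jordan form is a diagonal matrix plus a 0-1 matrix, and it is determined by
two labels on each index `x`: the eigenvalue `lam x` and the depth of `x`, which is the position of
its block among the blocks with the same eigenvalue. For `z` in the closed upper half plane, the
real-linear map `v ↦ B v - v z` on quaternion vectors is `D + N`, where `D` acts by
`q ↦ lam x * q - q * z` on the entry at `x` and `N` is nilpotent and commutes with `D`. On
quaternions, `q ↦ a q - q b` is semisimple because a commutator has real part zero, and for distinct
complex `a`, `b` in the closed upper half plane it is injective because they are not conjugate.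
Hence the kernel of `(D + N) ^ k` is `ker D ⊓ ker (N ^ k)`, whose dimension is a fixed positive
multiple of the number of indices with eigenvalue `z` and depth less than `k`. Similar matrices
therefore have equally many indices with each label, and since the indices are sorted by label, the
labels themselves agree.
-/

section LinearAlgebra

variable {R M : Type*} [CommRing R] [AddCommGroup M] [Module R M] {f g : Module.End R M}

lemma pow_apply_eq_zero_iff_of_apply_apply_eq_zero (hf : ∀ v, f (f v) = 0 → f v = 0) (k : ℕ)
    (v : M) : (f ^ (k + 1)) v = 0 ↔ f v = 0 := by
  induction k generalizing v with
  | zero => simp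
  | succ k ih =>
    rw [pow_succ, Module.End.mul_apply, ih]
    exact ⟨hf v, fun h => by rw [h, map_zero]⟩

/- If `(f + g) ^ k` and `g ^ m` kill `v`, then so does a power of `f = (f + g) - g`. -/
lemma apply_eq_zero_of_add_pow_apply_eq_zero (hfg : Commute f g) (hg : IsNilpotent g)
    (hf : ∀ v, f (f v) = 0 → f v = 0) {k : ℕ} {v : M} (hv : ((f + g) ^ k) v = 0) : f v = 0 := by
  obtain ⟨m, hm⟩ := hg
  let I : Ideal (Module.End R M) := Ideal.torsionOf _ M v
  have hmem : (f + g + -g) ^ (k + m) ∈ I :=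
    I.add_pow_mem_of_pow_mem_of_le_of_commute (m := k) (n := m) hv
      (by rw [neg_pow, hm, mul_zero]; exact I.zero_mem) (by lia)
      ((hfg.add_left (Commute.refl g)).neg_right)
  rw [add_neg_cancel_right] at hmem
  have hpow : (f ^ (k + m + 1)) v = 0 := by
    rw [pow_succ', Module.End.mul_apply, show (f ^ (k + m)) v = 0 from hmem, map_zero]
  exact (pow_apply_eq_zero_iff_of_apply_apply_eq_zero hf _ v).1 hpow

lemma add_pow_apply_of_apply_eq_zero (hfg : Commute f g) (k : ℕ) {v : M} (hv : f v = 0) :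
    ((f + g) ^ k) v = (g ^ k) v := by
  induction k generalizing v with
  | zero => rfl
  | succ k ih =>
    have hgv : f (g v) = 0 := by rw [← Module.End.mul_apply, hfg.eq, Module.End.mul_apply, hv,
      map_zero]
    rw [pow_succ, pow_succ, Module.End.mul_apply, Module.End.mul_apply, LinearMap.add_apply, hv,
      zero_add, ih hgv]

lemma ker_add_pow_of_commute (hfg : Commute f g) (hg : IsNilpotent g)
    (hf : ∀ v, f (f v) = 0 → f v = 0) (k : ℕ) :
    LinearMap.ker ((f + g) ^ k) = LinearMap.ker f ⊓ LinearMap.ker (g ^ k) := by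
  ext v
  simp only [Submodule.mem_inf, LinearMap.mem_ker]
  constructor
  · intro hv
    have hfv := apply_eq_zero_of_add_pow_apply_eq_zero hfg hg hf hv
    exact ⟨hfv, by rwa [← add_pow_apply_of_apply_eq_zero hfg k hfv]⟩
  · rintro ⟨hfv, hgv⟩
    rwa [add_pow_apply_of_apply_eq_zero hfg k hfv]

lemma finrank_ker_eq_of_isConj (h : IsConj f g) :
    Module.finrank R (LinearMap.ker f) = Module.finrank R (LinearMap.ker g) := by
  obtain ⟨u, hu⟩ := h
  let e : M ≃ₗ[R] M := LinearMap.GeneralLinearGroup.toLinearEquiv u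
  have he (v : M) : g (e v) = e (f v) := (LinearMap.congr_fun hu v).symm
  have hker : (LinearMap.ker f).map e.toLinearMap = LinearMap.ker g := by
    ext w
    obtain ⟨v, rfl⟩ := e.surjective w
    simp [he]
  rw [← hker, LinearEquiv.finrank_map_eq]

lemma finrank_pi_univ {K ι : Type*} [Field K] [Fintype ι] {V : ι → Type*}
    [∀ i, AddCommGroup (V i)] [∀ i, Module K (V i)] [∀ i, FiniteDimensional K (V i)]
    (p : ∀ i, Submodule K (V i)) :
    Module.finrank K (Submodule.pi Set.univ p) = ∑ i, Module.finrank K (p i) := by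
  let e : Submodule.pi Set.univ p ≃ₗ[K] ∀ i, p i :=
    { toFun := fun v i => ⟨v.1 i, v.2 i trivial⟩
      invFun := fun w => ⟨fun i => w i, fun i _ => (w i).2⟩
      map_add' := fun _ _ => rfl
      map_smul' := fun _ _ => rfl }
  rw [e.finrank_eq, Module.finrank_pi_fintype]

end LinearAlgebra

section Quaternion

lemma quaternion_re_mul_comm {R : Type*} [CommRing R] (p q : ℍ[R]) : (p * q).re = (q * p).re := by
  simp only [Quaternion.re_mul]
  ring

lemma eq_of_semiconjBy_cq {z w : ℂ} (hz : 0 ≤ z.im) (hw : 0 ≤ w.im) {q : ℍ[ℝ]} (hq : q ≠ 0)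
    (h : SemiconjBy q (cq z) (cq w)) : z = w := by
  have hconj : cq w = q * cq z * q⁻¹ := by rw [h.eq, mul_inv_cancel_right₀ hq]
  have hre : w.re = z.re := by
    have := quaternion_re_mul_comm (q * cq z) q⁻¹
    rwa [← hconj, inv_mul_cancel_left₀ hq] at this
  have hnorm : w.re ^ 2 + w.im ^ 2 = z.re ^ 2 + z.im ^ 2 := by
    have := congrArg Quaternion.normSq hconj
    rw [map_mul, map_mul, mul_right_comm, ← map_mul, mul_inv_cancel₀ hq, map_one, one_mul] at this
    rw [Quaternion.normSq_def', Quaternion.normSq_def'] at this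
    simpa [cq] using this
  rw [hre, add_right_inj, sq_eq_sq₀ hw hz] at hnorm
  exact Complex.ext hre.symm hnorm.symm

/-- The linear map `q ↦ a * q - q * b`; a unit `q` in its kernel conjugates `b` to `a`. -/
def commutatorMap (K : Type*) {A : Type*} [CommRing K] [Ring A] [Algebra K A] (a b : A) :
    Module.End K A :=
  LinearMap.mulLeft K a - LinearMap.mulRight K b

lemma commutatorMap_apply {K A : Type*} [CommRing K] [Ring A] [Algebra K A] (a b q : A) :
    commutatorMap K a b q = a * q - q * b := rfl

/- If `c = a * q - q * b` were nonzero with `a * c = c * b`, then `p = q * c⁻¹` would satisfy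
`a * p - p * a = 1`, but a commutator of quaternions has real part zero. -/
lemma commutatorMap_quaternion_apply_eq_zero (a b q : ℍ[ℝ])
    (h : commutatorMap ℝ a b (commutatorMap ℝ a b q) = 0) : commutatorMap ℝ a b q = 0 := by
  by_contra hc
  rw [commutatorMap_apply, sub_eq_zero] at h
  set c := commutatorMap ℝ a b q with hcdef
  have hb : b * c⁻¹ = c⁻¹ * a := by
    rw [eq_inv_mul_iff_mul_eq₀ hc, ← mul_assoc, ← h, mul_inv_cancel_right₀ hc]
  have hone : a * (q * c⁻¹) - q * c⁻¹ * a = 1 := by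
    rw [mul_assoc q, ← hb, ← mul_assoc, ← mul_assoc, ← sub_mul, ← commutatorMap_apply (K := ℝ),
      ← hcdef, mul_inv_cancel₀ hc]
  have hre := congrArg QuaternionAlgebra.re hone
  rw [Quaternion.re_sub, quaternion_re_mul_comm, sub_self] at hre
  exact zero_ne_one hre

lemma ker_commutatorMap_cq_of_ne {z w : ℂ} (hz : 0 ≤ z.im) (hw : 0 ≤ w.im) (hne : z ≠ w) :
    LinearMap.ker (commutatorMap ℝ (cq z) (cq w)) = ⊥ := by
  refine (LinearMap.ker_eq_bot').2 fun q hq => ?_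
  by_contra hq0
  exact hne (eq_of_semiconjBy_cq hw hz hq0 (sub_eq_zero.1 hq).symm).symm

lemma finrank_ker_commutatorMap_self_pos (a : ℍ[ℝ]) :
    0 < Module.finrank ℝ (LinearMap.ker (commutatorMap ℝ a a)) := by
  rw [Module.finrank_pos_iff_exists_ne_zero]
  exact ⟨⟨1, by simp [commutatorMap_apply]⟩, fun h => one_ne_zero (congrArg Subtype.val h)⟩

end Quaternion

section RightEigen

open scoped Matrix.Module

variable {K A m : Type*} [CommRing K] [Ring A] [Algebra K A] [Fintype m] [DecidableEq m]

variable (K) in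
/-- The linear map `v ↦ M v - v a` on column vectors, where `v a` multiplies all entries by `a` on
the right. The kernels of its powers are the generalized right eigenspaces of `M`. -/
def rightEigenMap (M : Matrix m m A) (a : A) : Module.End K (m → A) :=
  Algebra.lsmul K K (m → A) M - Algebra.lsmul K K (m → A) (MulOpposite.op a)

lemma commute_lsmul_lsmul_op (M : Matrix m m A) (a : A) :
    Commute (Algebra.lsmul K K (m → A) M) (Algebra.lsmul K K (m → A) (MulOpposite.op a)) := by
  ext v x
  simp [Finset.sum_mul, mul_assoc]

lemma rightEigenMap_add (M N : Matrix m m A) (a : A) :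
    rightEigenMap K (M + N) a = rightEigenMap K M a + Algebra.lsmul K K (m → A) N := by
  rw [rightEigenMap, rightEigenMap, map_add, add_sub_right_comm]

lemma isConj_rightEigenMap {M N : Matrix m m A} (h : IsConj M N) (a : A) :
    IsConj (rightEigenMap K M a) (rightEigenMap K N a) := by
  obtain ⟨S, hS⟩ := h
  refine ⟨Units.map (Algebra.lsmul K K (m → A)).toMonoidHom S, ?_⟩
  exact (hS.map (Algebra.lsmul K K (m → A))).sub_right (commute_lsmul_lsmul_op S.val a)

lemma rightEigenMap_diagonal_apply (d : m → A) (a : A) (v : m → A) (x : m) :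
    rightEigenMap K (diagonal d) a v x = commutatorMap K (d x) a (v x) := by
  simp [rightEigenMap, commutatorMap, diagonal_apply]

end RightEigen

section Layering

open scoped Matrix.Module

open Classical in
/-- The 0-1 matrix of a relation `r`, with entry `1` at `(x, y)` iff `r x y`. -/
def relMatrix {m : Type*} (A : Type*) [Zero A] [One A] (r : m → m → Prop) : Matrix m m A :=
  Matrix.of fun x y => if r x y then 1 else 0

/-- A decomposition of `m` into layers `depth = 0, 1, 2, …`, where the relation `r` is a partial
function mapping each layer onto the next one: the combinatorics of a nilpotent matrix in Weyr
form. -/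
structure IsLayering {m : Type*} (r : m → m → Prop) (depth : m → ℕ) : Prop where
  depth_eq : ∀ {x y}, r x y → depth y = depth x + 1
  rightUnique : Relator.RightUnique r
  exists_pred : ∀ y, depth y ≠ 0 → ∃ x, r x y

variable {A m : Type*} [Fintype m] {r : m → m → Prop} {depth : m → ℕ}

lemma relMatrix_mulVec_apply_of_rel [NonAssocSemiring A] (hr : Relator.RightUnique r) (v : m → A)
    {x y : m} (h : r x y) : (relMatrix A r *ᵥ v) x = v y := by
  rw [mulVec, dotProduct, Finset.sum_eq_single y]
  · simp [relMatrix, h]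
  · intro w _ hw
    have hxw : ¬ r x w := fun h' => hw (hr h' h)
    simp [relMatrix, hxw]
  · simp

lemma relMatrix_mulVec_apply_of_forall_not_rel [NonAssocSemiring A] (v : m → A) {x : m}
    (h : ∀ y, ¬ r x y) : (relMatrix A r *ᵥ v) x = 0 := by
  simp [relMatrix, mulVec, dotProduct, h]

variable [DecidableEq m]

lemma commute_diagonal_relMatrix [NonAssocSemiring A] {d : m → A}
    (hd : ∀ x y, r x y → d x = d y) : Commute (diagonal d) (relMatrix A r) := by
  ext x y
  by_cases h : r x y
  · simp [relMatrix, h, hd x y h]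
  · simp [relMatrix, h]

variable {K : Type*} [CommRing K] [Ring A] [Algebra K A] {d : m → A}

lemma IsLayering.lsmul_relMatrix_pow_apply_eq_zero_iff (h : IsLayering r depth) (k : ℕ)
    (v : m → A) :
    (Algebra.lsmul K K (m → A) (relMatrix A r) ^ k) v = 0 ↔ ∀ x, k ≤ depth x → v x = 0 := by
  induction k generalizing v with
  | zero => simp [funext_iff]
  | succ k ih =>
    rw [pow_succ, Module.End.mul_apply, ih]
    change (∀ x, k ≤ depth x → (relMatrix A r *ᵥ v) x = 0) ↔ _
    constructor
    · intro hv y hy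
      obtain ⟨x, hxy⟩ := h.exists_pred y (by lia)
      rw [← relMatrix_mulVec_apply_of_rel h.rightUnique v hxy]
      exact hv x (by have := h.depth_eq hxy; lia)
    · intro hv x hx
      by_cases hnext : ∃ y, r x y
      · obtain ⟨y, hxy⟩ := hnext
        rw [relMatrix_mulVec_apply_of_rel h.rightUnique v hxy]
        exact hv y (by have := h.depth_eq hxy; lia)
      · exact relMatrix_mulVec_apply_of_forall_not_rel v (not_exists.1 hnext)

lemma IsLayering.isNilpotent_lsmul_relMatrix (h : IsLayering r depth) :
    IsNilpotent (Algebra.lsmul K K (m → A) (relMatrix A r)) := by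
  refine ⟨Finset.univ.sup depth + 1, LinearMap.ext fun v => ?_⟩
  refine (h.lsmul_relMatrix_pow_apply_eq_zero_iff _ v).2 fun x hx => ?_
  have := Finset.le_sup (f := depth) (Finset.mem_univ x)
  lia

lemma commute_rightEigenMap_diagonal_lsmul_relMatrix (hd : ∀ x y, r x y → d x = d y) (a : A) :
    Commute (rightEigenMap K (diagonal d) a) (Algebra.lsmul K K (m → A) (relMatrix A r)) := by
  have hdr := (commute_diagonal_relMatrix hd).map (Algebra.lsmul K K (m → A))
  exact hdr.sub_left (commute_lsmul_lsmul_op _ a).symm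

lemma IsLayering.ker_rightEigenMap_pow (h : IsLayering r depth)
    (hd : ∀ x y, r x y → d x = d y) {a : A}
    (ha : ∀ x q, commutatorMap K (d x) a (commutatorMap K (d x) a q) = 0 →
      commutatorMap K (d x) a q = 0) (k : ℕ) :
    LinearMap.ker (rightEigenMap K (diagonal d + relMatrix A r) a ^ k) =
      Submodule.pi Set.univ fun x =>
        if depth x < k then LinearMap.ker (commutatorMap K (d x) a) else ⊥ := by
  have hsemisimple (v : m → A)
      (hv : rightEigenMap K (diagonal d) a (rightEigenMap K (diagonal d) a v) = 0) :
      rightEigenMap K (diagonal d) a v = 0 := by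
    ext x
    have hx := congrFun hv x
    rw [rightEigenMap_diagonal_apply, rightEigenMap_diagonal_apply] at hx
    rw [rightEigenMap_diagonal_apply]
    exact ha x (v x) hx
  rw [rightEigenMap_add, ker_add_pow_of_commute
    (commute_rightEigenMap_diagonal_lsmul_relMatrix hd a) h.isNilpotent_lsmul_relMatrix hsemisimple]
  ext v
  simp only [Submodule.mem_inf, LinearMap.mem_ker, h.lsmul_relMatrix_pow_apply_eq_zero_iff,
    funext_iff, rightEigenMap_diagonal_apply, Pi.zero_apply, Submodule.mem_pi, Set.mem_univ,
    true_imp_iff, ← forall_and]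
  refine forall_congr' fun x => ?_
  by_cases hx : depth x < k
  · simp [hx, hx.not_ge]
  · simp only [hx, if_false, Submodule.mem_bot, not_lt.1 hx, true_imp_iff]
    exact ⟨And.right, fun hvx => ⟨by rw [hvx, map_zero], hvx⟩⟩

end Layering

section FiberRank

variable {ι κ : Type*}

/-- The position of `x`, counted from `0`, among the elements with the same value of `f`. -/
def fiberRank [Preorder ι] (f : ι → κ) (x : ι) : ℕ :=
  {w | w < x ∧ f w = f x}.ncard

lemma fiberRank_comp_of_injective [Preorder ι] {κ' : Type*} {φ : κ → κ'}
    (hφ : Function.Injective φ) (f : ι → κ) : fiberRank (φ ∘ f) = fiberRank f := by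
  ext x
  simp only [fiberRank, Function.comp_apply, hφ.eq_iff]

lemma fiberRank_lt_fiberRank [Preorder ι] [Finite ι] {f : ι → κ} {x y : ι} (hxy : x < y)
    (h : f x = f y) : fiberRank f x < fiberRank f y := by
  refine Set.ncard_lt_ncard (Set.ssubset_iff_of_subset ?_ |>.2 ⟨x, ⟨hxy, h⟩, ?_⟩)
  · exact fun w hw => ⟨hw.1.trans hxy, hw.2.trans h⟩
  · exact fun hx => lt_irrefl x hx.1

lemma fiberRank_eq_add_one_of_covBy [LinearOrder ι] [Finite ι] {f : ι → κ} {x y : ι} (hxy : x ⋖ y)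
    (h : f x = f y) : fiberRank f y = fiberRank f x + 1 := by
  have hinsert : {w | w < y ∧ f w = f y} = insert x {w | w < x ∧ f w = f x} := by
    ext w
    simp only [Set.mem_insert_iff, Set.mem_ofPred_eq, hxy.lt_iff_le_left, le_iff_eq_or_lt, h]
    constructor
    · tauto
    · rintro (rfl | hw)
      · exact ⟨Or.inl rfl, h⟩
      · exact ⟨Or.inr hw.1, hw.2⟩
  rw [fiberRank, hinsert, Set.ncard_insert_of_notMem (by simp), fiberRank]

lemma injective_prodMk_fiberRank [LinearOrder ι] [Finite ι] (f : ι → κ) :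
    Function.Injective fun x => (f x, fiberRank f x) := by
  intro x y hxy
  obtain ⟨hf, hrank⟩ := Prod.mk.inj hxy
  rcases lt_trichotomy x y with hlt | heq | hgt
  · exact absurd hrank (fiberRank_lt_fiberRank hlt hf).ne
  · exact heq
  · exact absurd hrank (fiberRank_lt_fiberRank hgt hf.symm).ne'

lemma monotone_toLex_fiberRank [PartialOrder ι] [Finite ι] [PartialOrder κ] {f : ι → κ}
    (hf : Monotone f) : Monotone fun x => toLex (f x, fiberRank f x) := by
  intro x y hxy
  rw [Prod.Lex.toLex_le_toLex]
  rcases (hf hxy).lt_or_eq with hlt | heq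
  · exact Or.inl hlt
  · rcases hxy.lt_or_eq with hlt | rfl
    · exact Or.inr ⟨heq, (fiberRank_lt_fiberRank hlt heq).le⟩
    · exact Or.inr ⟨rfl, le_rfl⟩

lemma ordConnected_preimage_singleton_of_monotone_comp {α : Type*} [Preorder ι] [PartialOrder α]
    {φ : κ → α} (hφ : Function.Injective φ) {f : ι → κ} (hf : Monotone (φ ∘ f)) (c : κ) :
    (f ⁻¹' {c}).OrdConnected := by
  have hfiber : f ⁻¹' {c} = φ ∘ f ⁻¹' {φ c} := by
    ext x
    simp [hφ.eq_iff]
  rw [hfiber]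
  exact Set.ordConnected_singleton.preimage_mono hf

lemma exists_covBy_of_fiberRank_ne_zero [LinearOrder ι] [Finite ι] {f : ι → κ}
    (hf : ∀ c, (f ⁻¹' {c}).OrdConnected) {y : ι} (hy : fiberRank f y ≠ 0) :
    ∃ x, x ⋖ y ∧ f x = f y := by
  obtain ⟨w, hwy, hw⟩ := Set.nonempty_of_ncard_ne_zero hy
  obtain ⟨x, hwx, hxy⟩ := exists_le_covBy_of_lt hwy
  exact ⟨x, hxy, (hf (f y)).out hw rfl ⟨hwx, hxy.le⟩⟩

lemma covBy_iff_fiberRank_eq_add_one [LinearOrder ι] [Finite ι] {f : ι → κ}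
    (hf : ∀ c, (f ⁻¹' {c}).OrdConnected) {x y : ι} (h : f x = f y) :
    x ⋖ y ↔ fiberRank f y = fiberRank f x + 1 := by
  refine ⟨fun hxy => fiberRank_eq_add_one_of_covBy hxy h, fun hrank => ?_⟩
  obtain ⟨w, hwy, hw⟩ := exists_covBy_of_fiberRank_ne_zero hf (y := y) (by lia)
  have hrank' := fiberRank_eq_add_one_of_covBy hwy hw
  have hrank_eq : fiberRank f x = fiberRank f w := by lia
  rwa [injective_prodMk_fiberRank f (Prod.ext (h.trans hw.symm) hrank_eq)]

lemma eq_of_monotone_of_card_fiber_eq {β α : Type*} [PartialOrder α] {φ : β → α}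
    (hφ : Function.Injective φ) {n : ℕ} {f g : Fin n → β} (hf : Monotone (φ ∘ f))
    (hg : Monotone (φ ∘ g)) (h : ∀ b, {x | f x = b}.ncard = {x | g x = b}.ncard) : f = g := by
  have e (b : β) : {x // f x = b} ≃ {x // g x = b} := (Finite.card_eq.1 (h b)).some
  let σ : Equiv.Perm (Fin n) := Equiv.ofFiberEquiv e
  have hσ : g ∘ σ = f := funext (Equiv.ofFiberEquiv_map e)
  have hcomp : (φ ∘ g) ∘ σ = φ ∘ g :=
    Tuple.unique_monotone (σ := σ) (τ := 1) (by rwa [Function.comp_assoc, hσ]) hg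
  rw [Function.comp_assoc, hσ] at hcomp
  exact hφ.comp_left hcomp

end FiberRank

section Weyr

lemma isConj_of_similarQ {m : Type*} [Fintype m] [DecidableEq m] {A B : Matrix m m ℍ[ℝ]}
    (h : SimilarQ A B) : IsConj A B := by
  obtain ⟨S, hS⟩ := h
  refine ⟨S, ?_⟩
  rw [SemiconjBy, hS, mul_assoc, ← mul_assoc S.val, Units.mul_inv, one_mul]

/-- Orders complex numbers so that `csucceq z w` becomes `eigenKey z ≤ eigenKey w`. -/
def eigenKey (z : ℂ) : (ℝ ×ₗ ℝ)ᵒᵈ :=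
  OrderDual.toDual (toLex (z.im, z.re))

lemma eigenKey_injective : Function.Injective eigenKey := by
  intro z w h
  simp only [eigenKey, EmbeddingLike.apply_eq_iff_eq, Prod.mk.injEq] at h
  exact Complex.ext h.2 h.1

lemma eigenKey_le_eigenKey_iff {z w : ℂ} : eigenKey z ≤ eigenKey w ↔ csucceq z w := by
  rw [eigenKey, eigenKey, OrderDual.toDual_le_toDual, Prod.Lex.toLex_le_toLex, csucceq, or_comm,
    eq_comm, and_comm]

variable {m : Type*} [LinearOrder m] {lam : m → ℂ} {depth : m → ℕ}

/-- `y` succeeds `x` in its Jordan chain: both have the same eigenvalue and the same position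
within their layers, and `y` lies one layer deeper. -/
def WeyrSucc (lam : m → ℂ) (depth : m → ℕ) (x y : m) : Prop :=
  lam x = lam y ∧ depth y = depth x + 1 ∧
    fiberRank (fun w => (lam w, depth w)) x = fiberRank (fun w => (lam w, depth w)) y

/-- The Weyr matrix whose index `x` has eigenvalue `lam x` and lies in layer `depth x`. -/
def weyrMatrix (lam : m → ℂ) (depth : m → ℕ) : Matrix m m ℍ[ℝ] :=
  diagonal (cq ∘ lam) + relMatrix ℍ[ℝ] (WeyrSucc lam depth)

/-- The labels `lam`, `depth` come from a matrix in modified Jordan form: eigenvalues lie in the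
closed upper half plane, indices are sorted by eigenvalue and then by depth, and the sizes of the
layers with a given eigenvalue decrease, so that every index of positive depth has a
predecessor. -/
structure IsWeyrLabelling (lam : m → ℂ) (depth : m → ℕ) : Prop where
  im_nonneg : ∀ x, 0 ≤ (lam x).im
  monotone : Monotone fun x => toLex (eigenKey (lam x), depth x)
  exists_pred : ∀ y, depth y ≠ 0 → ∃ x, WeyrSucc lam depth x y

lemma IsWeyrLabelling.isLayering [Finite m] (h : IsWeyrLabelling lam depth) :
    IsLayering (WeyrSucc lam depth) depth where
  depth_eq hxy := hxy.2.1
  rightUnique x y w hxy hxw := by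
    have hlabel : (lam y, depth y) = (lam w, depth w) :=
      Prod.ext (hxy.1.symm.trans hxw.1) (hxy.2.1.trans hxw.2.1.symm)
    exact injective_prodMk_fiberRank (fun w => (lam w, depth w))
      (Prod.ext hlabel (hxy.2.2.symm.trans hxw.2.2))
  exists_pred := h.exists_pred

variable [Fintype m] {z : ℂ}

lemma IsWeyrLabelling.finrank_ker_rightEigenMap_pow (h : IsWeyrLabelling lam depth)
    (hz : 0 ≤ z.im) (k : ℕ) :
    Module.finrank ℝ (LinearMap.ker (rightEigenMap ℝ (weyrMatrix lam depth) (cq z) ^ k)) =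
      {x | lam x = z ∧ depth x < k}.ncard *
        Module.finrank ℝ (LinearMap.ker (commutatorMap ℝ (cq z) (cq z))) := by
  rw [weyrMatrix, h.isLayering.ker_rightEigenMap_pow (d := cq ∘ lam)
    (fun _ _ hxy => congrArg cq hxy.1)
    (fun _ => commutatorMap_quaternion_apply_eq_zero _ _), finrank_pi_univ,
    Set.ncard_eq_toFinset_card', Set.toFinset_ofPred, Finset.card_filter, Finset.sum_mul]
  refine Finset.sum_congr rfl fun x _ => ?_
  rw [Function.comp_apply]
  by_cases hx : depth x < k
  · rw [if_pos hx]
    by_cases hxz : lam x = z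
    · subst hxz
      simp [hx]
    · simp [hxz, ker_commutatorMap_cq_of_ne (h.im_nonneg x) hz hxz]
  · simp [hx]

lemma ncard_and_lt_succ {m κ : Type*} [Finite m] (f : m → κ) (depth : m → ℕ) (c : κ) (k : ℕ) :
    {x | f x = c ∧ depth x < k + 1}.ncard =
      {x | f x = c ∧ depth x < k}.ncard + {x | f x = c ∧ depth x = k}.ncard := by
  rw [← Set.ncard_union_eq]
  · congr 1
    ext x
    simp only [Set.mem_ofPred_eq, Set.mem_union, Nat.lt_succ_iff_lt_or_eq, and_or_left]
  · exact Set.disjoint_left.2 fun x hx hx' => hx.2.ne hx'.2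

namespace IsWeyrLabelling

variable {lam' : m → ℂ} {depth' : m → ℕ}

variable (h : IsWeyrLabelling lam depth) (h' : IsWeyrLabelling lam' depth')
  (hconj : IsConj (weyrMatrix lam depth) (weyrMatrix lam' depth'))
include h h' hconj

lemma ncard_depth_lt_eq_of_isConj (hz : 0 ≤ z.im) (k : ℕ) :
    {x | lam x = z ∧ depth x < k}.ncard = {x | lam' x = z ∧ depth' x < k}.ncard := by
  have hfinrank := finrank_ker_eq_of_isConj ((isConj_rightEigenMap (K := ℝ) hconj (cq z)).pow k)
  rw [h.finrank_ker_rightEigenMap_pow hz, h'.finrank_ker_rightEigenMap_pow hz] at hfinrank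
  exact Nat.eq_of_mul_eq_mul_right (finrank_ker_commutatorMap_self_pos _) hfinrank

lemma ncard_label_eq_of_isConj (z : ℂ) (k : ℕ) :
    {x | lam x = z ∧ depth x = k}.ncard = {x | lam' x = z ∧ depth' x = k}.ncard := by
  by_cases hz : 0 ≤ z.im
  · have hlam := ncard_and_lt_succ lam depth z k
    have hlam' := ncard_and_lt_succ lam' depth' z k
    rw [h.ncard_depth_lt_eq_of_isConj h' hconj hz, h.ncard_depth_lt_eq_of_isConj h' hconj hz]
      at hlam
    lia
  · have hne (x) : lam x ≠ z := fun hx => hz (hx ▸ h.im_nonneg x)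
    have hne' (x) : lam' x ≠ z := fun hx => hz (hx ▸ h'.im_nonneg x)
    simp [hne, hne']

end IsWeyrLabelling

lemma IsWeyrLabelling.eq_of_isConj {n : ℕ} {lam lam' : Fin n → ℂ} {depth depth' : Fin n → ℕ}
    (h : IsWeyrLabelling lam depth) (h' : IsWeyrLabelling lam' depth')
    (hconj : IsConj (weyrMatrix lam depth) (weyrMatrix lam' depth')) :
    lam = lam' ∧ depth = depth' := by
  have hkey : Function.Injective fun p : ℂ × ℕ => toLex (eigenKey p.1, p.2) :=
    toLex.injective.comp (eigenKey_injective.prodMap Function.injective_id)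
  have hlabel : (fun x => (lam x, depth x)) = fun x => (lam' x, depth' x) :=
    eq_of_monotone_of_card_fiber_eq hkey h.monotone h'.monotone fun p => by
      simpa only [Prod.ext_iff] using h.ncard_label_eq_of_isConj h' hconj p.1 p.2
  exact ⟨congrArg (Prod.fst ∘ ·) hlabel, congrArg (Prod.snd ∘ ·) hlabel⟩

end Weyr

section Blocks

variable {n s : ℕ} {sz : Fin s → ℕ}

lemma psum_mono (sz : Fin s → ℕ) : Monotone (psum sz) := fun _ _ h =>
  Finset.sum_le_sum_of_subset (Finset.range_mono h)

lemma psum_succ (sz : Fin s → ℕ) (t : Fin s) : psum sz (t + 1) = psum sz t + sz t := by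
  simp [psum, Finset.sum_range_succ]

lemma psum_self (sz : Fin s → ℕ) : psum sz s = ∑ t, sz t := by
  simp [psum, Finset.sum_range]

lemma exists_inBlock {r k : ℕ} (hk : k ≤ s) (hr : r < psum sz k) : ∃ t, InBlock sz t r := by
  induction k with
  | zero => simp [psum] at hr
  | succ k ih =>
    by_cases hrk : r < psum sz k
    · exact ih (by lia) hrk
    · exact ⟨⟨k, hk⟩, not_lt.1 hrk, hr⟩

lemma InBlock.le_of_le {t u : Fin s} {q r : ℕ} (hq : InBlock sz t q) (hr : InBlock sz u r)
    (hqr : q ≤ r) : t ≤ u := by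
  by_contra! hlt
  have hend : psum sz (u + 1) ≤ psum sz t := psum_mono sz hlt
  exact absurd (hqr.trans_lt (hr.2.trans_le (hend.trans hq.1))) (lt_irrefl q)

lemma InBlock.unique {t u : Fin s} {r : ℕ} (ht : InBlock sz t r) (hu : InBlock sz u r) : t = u :=
  le_antisymm (ht.le_of_le hu le_rfl) (hu.le_of_le ht le_rfl)

lemma covBy_iff_exists_eq_mk_add_one {t u : Fin s} :
    t ⋖ u ↔ ∃ h : (t : ℕ) + 1 < s, u = ⟨t + 1, h⟩ := by
  rw [Fin.covBy_iff, Nat.covBy_iff_add_one_eq]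
  exact ⟨fun h => ⟨h ▸ u.2, Fin.ext h.symm⟩, fun ⟨_, h⟩ => h ▸ rfl⟩

lemma psum_of_covBy {t u : Fin s} (h : t ⋖ u) : psum sz u = psum sz t + sz t := by
  obtain ⟨_, rfl⟩ := covBy_iff_exists_eq_mk_add_one.1 h
  exact psum_succ sz t

lemma monotone_eigenKey_comp {lam : Fin s → ℂ}
    (h : ∀ (t : Fin s) (ht : (t : ℕ) + 1 < s), csucceq (lam t) (lam ⟨t + 1, ht⟩)) :
    Monotone (eigenKey ∘ lam) := by
  rw [monotone_iff_forall_covBy]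
  intro t u htu
  obtain ⟨ht, rfl⟩ := covBy_iff_exists_eq_mk_add_one.1 htu
  exact eigenKey_le_eigenKey_iff.2 (h t ht)

lemma weyrSucc_comp_fiberRank_iff {m ι : Type*} [LinearOrder m] [LinearOrder ι] [Finite ι]
    {lam : ι → ℂ} (hlam : ∀ z, (lam ⁻¹' {z}).OrdConnected) (blk : m → ι) (x y : m) :
    WeyrSucc (lam ∘ blk) (fiberRank lam ∘ blk) x y ↔
      blk x ⋖ blk y ∧ lam (blk x) = lam (blk y) ∧ fiberRank blk x = fiberRank blk y := by
  have hrank : fiberRank (fun w => ((lam ∘ blk) w, (fiberRank lam ∘ blk) w)) = fiberRank blk :=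
    fiberRank_comp_of_injective (injective_prodMk_fiberRank lam) blk
  rw [WeyrSucc, hrank]
  constructor
  · rintro ⟨heq, hdepth, hoff⟩
    exact ⟨(covBy_iff_fiberRank_eq_add_one hlam heq).2 hdepth, heq, hoff⟩
  · rintro ⟨hcov, heq, hoff⟩
    exact ⟨heq, (covBy_iff_fiberRank_eq_add_one hlam heq).1 hcov, hoff⟩

lemma eq_weyrMatrix_comp_fiberRank {m ι : Type*} [LinearOrder m] [LinearOrder ι] [Finite ι]
    {lam : ι → ℂ} {blk : m → ι} {B : Matrix m m ℍ[ℝ]}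
    (hlam : ∀ z, (lam ⁻¹' {z}).OrdConnected)
    (hdiag : ∀ x y, blk x = blk y → B x y = if x = y then cq (lam (blk x)) else 0)
    (hsup : ∀ x y, blk x ⋖ blk y → B x y =
      if lam (blk x) = lam (blk y) ∧ fiberRank blk x = fiberRank blk y then 1 else 0)
    (hzero : ∀ x y, blk x ≠ blk y → ¬ blk x ⋖ blk y → B x y = 0) :
    B = weyrMatrix (lam ∘ blk) (fiberRank lam ∘ blk) := by
  ext1 x y
  rw [weyrMatrix, Matrix.add_apply, diagonal_apply, relMatrix, of_apply,
    weyrSucc_comp_fiberRank_iff hlam]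
  by_cases hxy : blk x = blk y
  · simp [hdiag x y hxy, hxy]
  · have hne : x ≠ y := fun h => hxy (h ▸ rfl)
    by_cases hcov : blk x ⋖ blk y
    · simp [hsup x y hcov, hcov, hne]
    · simp [hzero x y hxy hcov, hcov, hne]

section InBlock

variable {lam : Fin s → ℂ} {blk : Fin n → Fin s} (hblk : ∀ x : Fin n, InBlock sz (blk x) x)
include hblk

lemma monotone_of_forall_inBlock : Monotone blk := fun x y hxy =>
  (hblk x).le_of_le (hblk y) hxy

lemma fiberRank_eq_sub_psum (x : Fin n) : fiberRank blk x = x - psum sz (blk x) := by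
  have hstart : psum sz (blk x) < n := (hblk x).1.trans_lt x.2
  have hIco : {w | w < x ∧ blk w = blk x} = Finset.Ico ⟨psum sz (blk x), hstart⟩ x := by
    ext w
    simp only [Set.mem_ofPred_eq, Finset.coe_Ico, Set.mem_Ico, Fin.le_def]
    constructor
    · rintro ⟨hw, hwx⟩
      exact ⟨hwx ▸ (hblk w).1, hw⟩
    · rintro ⟨hle, hw⟩
      exact ⟨hw, (hblk w).unique ⟨hle, lt_trans hw (hblk x).2⟩⟩
  rw [fiberRank, hIco, Set.ncard_coe_finset, Fin.card_Ico]

lemma exists_fiberRank_eq_of_covBy {t : Fin s} {y : Fin n} (ht : t ⋖ blk y)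
    (hsz : sz (blk y) ≤ sz t) : ∃ x, blk x = t ∧ fiberRank blk x = fiberRank blk y := by
  have hstart := psum_of_covBy (sz := sz) ht
  have hlow := (hblk y).1
  have hupp := (hblk y).2
  rw [psum_succ] at hupp
  let x : Fin n := ⟨y - sz t, by lia⟩
  have hx : blk x = t := by
    refine (hblk x).unique ⟨?_, ?_⟩
    · change psum sz t ≤ y - sz t
      lia
    · change y - sz t < psum sz (t + 1)
      rw [psum_succ]
      lia
  refine ⟨x, hx, ?_⟩
  rw [fiberRank_eq_sub_psum hblk, fiberRank_eq_sub_psum hblk, hx, hstart]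
  change y - sz t - psum sz t = _
  lia

lemma isWeyrLabelling_comp_fiberRank (him : ∀ t, 0 ≤ (lam t).im)
    (hmono : Monotone (eigenKey ∘ lam))
    (hsz : ∀ t u, t ⋖ u → lam t = lam u → sz u ≤ sz t) :
    IsWeyrLabelling (lam ∘ blk) (fiberRank lam ∘ blk) where
  im_nonneg x := him (blk x)
  monotone := by
    have hlex := monotone_toLex_fiberRank hmono
    rw [fiberRank_comp_of_injective eigenKey_injective] at hlex
    exact hlex.comp (monotone_of_forall_inBlock hblk)
  exists_pred y hy := by
    have hlam := ordConnected_preimage_singleton_of_monotone_comp eigenKey_injective hmono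
    obtain ⟨t, ht, heq⟩ := exists_covBy_of_fiberRank_ne_zero hlam hy
    obtain ⟨x, rfl, hoff⟩ := exists_fiberRank_eq_of_covBy hblk ht (hsz t _ ht heq)
    exact ⟨x, (weyrSucc_comp_fiberRank_iff hlam blk x y).2 ⟨ht, heq, hoff⟩⟩

end InBlock

lemma IsModifiedJordan.exists_eq_weyrMatrix {B : Matrix (Fin n) (Fin n) ℍ[ℝ]}
    (hB : IsModifiedJordan B) :
    ∃ lam depth, IsWeyrLabelling lam depth ∧ B = weyrMatrix lam depth := by
  obtain ⟨s, sz, lam, -, hsum, him, horder, hdiag, hzero, hsup⟩ := hB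
  have hmono := monotone_eigenKey_comp horder
  choose blk hblk using fun x : Fin n =>
    exists_inBlock le_rfl (x.2.trans_eq (hsum.symm.trans (psum_self sz).symm))
  refine ⟨lam ∘ blk, fiberRank lam ∘ blk, isWeyrLabelling_comp_fiberRank hblk him hmono ?_,
    eq_weyrMatrix_comp_fiberRank
      (ordConnected_preimage_singleton_of_monotone_comp eigenKey_injective hmono) ?_ ?_ ?_⟩
  · intro t u htu heq
    obtain ⟨ht, rfl⟩ := covBy_iff_exists_eq_mk_add_one.1 htu
    exact ((hsup t ht).2 heq).1
  · intro x y hxy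
    exact hdiag x y (blk x) (hblk x) (hxy ▸ hblk y)
  · intro x y hxy
    obtain ⟨ht, hy⟩ := covBy_iff_exists_eq_mk_add_one.1 hxy
    have hyblk := hy ▸ hblk y
    rw [fiberRank_eq_sub_psum hblk, fiberRank_eq_sub_psum hblk, hy]
    by_cases heq : lam (blk x) = lam ⟨blk x + 1, ht⟩
    · rw [((hsup _ ht).2 heq).2 x y (hblk x) hyblk]
      simp [heq]
    · rw [(hsup _ ht).1 heq x y (hblk x) hyblk]
      simp [heq]
  · intro x y hne hncov
    refine hzero x y _ _ (hblk x) (hblk y) (fun h => hne (Fin.ext h).symm) fun h => hncov ?_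
    exact Fin.covBy_iff.2 (Nat.covBy_iff_add_one_eq.2 h.symm)

end Blocks

/-- **Lemma 2.2 (uniqueness).** If two modified Jordan matrices are similar over `ℍ`,
then they are equal. -/
theorem modified_jordan_unique {n : ℕ} (B B' : Matrix (Fin n) (Fin n) ℍ[ℝ])
    (hB : IsModifiedJordan B) (hB' : IsModifiedJordan B') (h : SimilarQ B B') :
    B = B' := by
  obtain ⟨lam, depth, hlabel, rfl⟩ := hB.exists_eq_weyrMatrix
  obtain ⟨lam', depth', hlabel', rfl⟩ := hB'.exists_eq_weyrMatrix
  obtain ⟨rfl, rfl⟩ := hlabel.eq_of_isConj hlabel' (isConj_of_similarQ h)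
  rfl
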